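/- Let G be a cactus graph on n vertices and U a set of 4k−2 vertices of G. Then there exists a partition of U into k parts such that the geodesic convex hulls of all parts have a common vertex. -/

import Mathlib

/-- A set of vertices is geodesically convex if it contains every vertex on
every shortest path between two of its elements. -/
def IsGeodesicallyConvex {V : Type*} (G : SimpleGraph V) (S : Set V) : Prop :=
  ∀ u ∈ S, ∀ v ∈ S, ∀ w : G.Walk u v, w.length = G.dist u v → ∀ x ∈ w.support, x ∈ S

/-- The geodesic convex hull of a set of vertices. -/
def geodesicConvexHull {V : Type*} (G : SimpleGraph V) (A : Set V) : Set V :=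
  ⋂₀ {S : Set V | IsGeodesicallyConvex G S ∧ A ⊆ S}

namespace CactusTv

theorem finish {V : Type*} [Fintype V] [DecidableEq V] (G : SimpleGraph V) (k : ℕ) (hk : 1 ≤ k)
    (U : Finset V) (B : Fin k → Finset V) (hB : ∀ i, B i ⊆ U)
    (hd : ∀ i j, i ≠ j → Disjoint (B i) (B j)) (x : V)
    (hx : ∀ i, ∀ S : Set V, IsGeodesicallyConvex G S → (B i : Set V) ⊆ S → x ∈ S) :
    ∃ A : Fin k → Finset V,
      (∀ i j, i ≠ j → Disjoint (A i) (A j)) ∧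
      (Finset.univ.biUnion A = U) ∧
      (⋂ i, geodesicConvexHull G (A i : Set V)).Nonempty := by
  classical
  let R : Finset V := U \ Finset.univ.biUnion B
  let i0 : Fin k := ⟨0, hk⟩
  have hR : ∀ i, Disjoint (B i) R := by
    intro i
    rw [Finset.disjoint_left]
    intro a ha haR
    simp only [R, Finset.mem_sdiff, Finset.mem_biUnion, not_exists] at haR
    exact haR.2 i ⟨Finset.mem_univ _, ha⟩
  refine ⟨fun i => B i ∪ (if i = i0 then R else ∅), ?_, ?_, x, ?_⟩
  · intro i j hij
    have h1 := hd i j hij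
    have h2 := hR i
    have h3 := hR j
    by_cases hi : i = i0
    · have hj : j ≠ i0 := fun h => hij (hi.trans h.symm)
      simp only [hi, hj, if_true, if_false, Finset.union_empty]
      rw [Finset.disjoint_union_left]
      exact ⟨hi ▸ h1, h3.symm⟩
    · by_cases hj : j = i0
      · simp only [hi, hj, if_true, if_false, Finset.union_empty]
        rw [Finset.disjoint_union_right]
        exact ⟨hj ▸ h1, h2⟩
      · simpa [hi, hj] using h1
  · ext a
    simp only [Finset.mem_biUnion, Finset.mem_univ, true_and, Finset.mem_union]
    constructor
    · rintro ⟨i, h | h⟩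
      · exact hB i h
      · split_ifs at h
        · exact (Finset.mem_sdiff.1 h).1
        · simp at h
    · intro ha
      by_cases h : ∃ i, a ∈ B i
      · obtain ⟨i, hi⟩ := h
        exact ⟨i, Or.inl hi⟩
      · refine ⟨i0, Or.inr ?_⟩
        simp only [if_true]
        simp only [R, Finset.mem_sdiff, Finset.mem_biUnion, Finset.mem_univ, true_and]
        exact ⟨ha, h⟩
  · rw [Set.mem_iInter]
    intro i
    rw [geodesicConvexHull, Set.mem_sInter]
    rintro S ⟨hS, hAS⟩
    refine hx i S hS (subset_trans ?_ hAS)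
    intro a ha
    simp only [Finset.coe_union, Set.mem_union]
    exact Or.inl ha

theorem finish_pairs {V : Type*} [Fintype V] [DecidableEq V] (G : SimpleGraph V) (k : ℕ)
    (hk : 1 ≤ k) (U : Finset V) (N : ℕ) (p : ℕ → V) (hp : ∀ i < N, p i ∈ U)
    (hinj : ∀ i < N, ∀ j < N, p i = p j → i = j) (a b : ℕ) (hab : a + k ≤ b) (hb : b + k ≤ N)
    (x : V) (hx : ∀ i < k, ∀ S : Set V, IsGeodesicallyConvex G S → p (a + i) ∈ S →
      p (b + i) ∈ S → x ∈ S) :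
    ∃ A : Fin k → Finset V,
      (∀ i j, i ≠ j → Disjoint (A i) (A j)) ∧
      (Finset.univ.biUnion A = U) ∧
      (⋂ i, geodesicConvexHull G (A i : Set V)).Nonempty := by
  refine finish G k hk U (fun i => {p (a + i), p (b + i)}) ?_ ?_ x ?_
  · intro i v hv
    have := i.2
    simp only [Finset.mem_insert, Finset.mem_singleton] at hv
    rcases hv with rfl | rfl <;> apply hp <;> omega
  · intro i j hij
    have := i.2
    have := j.2
    have hij' : (i : ℕ) ≠ j := fun h => hij (Fin.ext h)
    rw [Finset.disjoint_left]
    intro v hv hv'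
    simp only [Finset.mem_insert, Finset.mem_singleton] at hv hv'
    rcases hv with rfl | rfl <;> rcases hv' with h | h <;>
      have := hinj _ (by omega) _ (by omega) h <;> omega
  · intro i S hS hsub
    refine hx i i.2 S hS (hsub ?_) (hsub ?_) <;> simp

theorem sort_exists {V : Type*} [DecidableEq V] [Nonempty V] (U : Finset V) (f : V → ℕ) :
    ∃ p : ℕ → V, (∀ i < U.card, p i ∈ U) ∧
      (∀ i < U.card, ∀ j < U.card, p i = p j → i = j) ∧
      (∀ i j, i ≤ j → j < U.card → f (p i) ≤ f (p j)) ∧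
      (∀ P : V → Prop, ∀ [DecidablePred P], ∀ T : Finset ℕ,
        (∀ i < U.card, P (p i) → i ∈ T) → (U.filter P).card ≤ T.card) ∧
      (∀ P : V → Prop, ∀ [DecidablePred P], ∀ T : Finset ℕ,
        (∀ i ∈ T, i < U.card ∧ P (p i)) → T.card ≤ (U.filter P).card) := by
  classical
  let e := U.equivFin.symm
  let g : Fin U.card → ℕ := fun i => f (e i)
  let σ := Tuple.sort g
  have hmono : Monotone (g ∘ σ) := Tuple.monotone_sort g
  let p : ℕ → V := fun i => if h : i < U.card then (e (σ ⟨i, h⟩) : V) else Classical.arbitrary V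
  have hpi : ∀ i (h : i < U.card), p i = (e (σ ⟨i, h⟩) : V) := fun i h => by simp [p, h]
  have hinj : ∀ i < U.card, ∀ j < U.card, p i = p j → i = j := by
    intro i hi j hj h
    rw [hpi i hi, hpi j hj] at h
    have := σ.injective (e.injective (Subtype.ext h))
    simpa using this
  have hmem : ∀ i < U.card, p i ∈ U := by
    intro i hi
    rw [hpi i hi]
    exact (e (σ ⟨i, hi⟩)).2
  refine ⟨p, hmem, hinj, ?_, ?_, ?_⟩
  · intro i j hij hj
    rw [hpi i (by omega), hpi j hj]
    exact hmono (show (⟨i, by omega⟩ : Fin U.card) ≤ ⟨j, hj⟩ from hij)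
  · intro P _ T hT
    have : U.filter P ⊆ T.image p := by
      intro u hu
      rw [Finset.mem_filter] at hu
      have h1 : p (σ.symm (e.symm ⟨u, hu.1⟩)) = u := by
        rw [hpi _ (Fin.is_lt _)]
        simp
      refine Finset.mem_image.2 ⟨_, hT _ (Fin.is_lt _) ?_, h1⟩
      rw [h1]
      exact hu.2
    exact (Finset.card_le_card this).trans Finset.card_image_le
  · intro P _ T hT
    apply Finset.card_le_card_of_injOn p
    · intro i hi
      have := hT i hi
      simpa using ⟨hmem i this.1, this.2⟩
    · intro i hi j hj h
      exact hinj i (hT i hi).1 j (hT j hj).1 h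

/-- the graph with all edges at `x` removed -/
def avoid {V : Type*} (G : SimpleGraph V) (x : V) : SimpleGraph V where
  Adj u v := G.Adj u v ∧ u ≠ x ∧ v ≠ x
  symm := ⟨fun _ _ h => ⟨h.1.symm, h.2.2, h.2.1⟩⟩
  loopless := ⟨fun _ h => h.1.ne rfl⟩

theorem avoid_reach {V : Type*} (G : SimpleGraph V) (x : V) {u v : V} (w : G.Walk u v)
    (h : x ∉ w.support) : (avoid G x).Reachable u v := by
  induction w with
  | nil => exact SimpleGraph.Reachable.refl _
  | cons hadj w ih =>
    simp only [SimpleGraph.Walk.support_cons, List.mem_cons, not_or] at h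
    have h2 := ih h.2
    refine SimpleGraph.Reachable.trans (SimpleGraph.Adj.reachable ?_) h2
    refine ⟨hadj, fun h' => h.1 h'.symm, fun h' => h.2 ?_⟩
    rw [← h']
    exact SimpleGraph.Walk.start_mem_support _

theorem avoid_le {V : Type*} (G : SimpleGraph V) (x : V) : avoid G x ≤ G := fun _ _ h => h.1

theorem avoid_support {V : Type*} (G : SimpleGraph V) (x : V) {u v : V}
    (w : (avoid G x).Walk u v) (hu : u ≠ x) : x ∉ w.support := by
  induction w with
  | nil => simpa using hu.symm
  | cons hadj w ih =>
    simp only [SimpleGraph.Walk.support_cons, List.mem_cons, not_or]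
    exact ⟨hu.symm, ih hadj.2.2⟩

theorem geo_mem {V : Type*} (G : SimpleGraph V) (hconn : G.Connected) {S : Set V}
    (hS : IsGeodesicallyConvex G S) {u v x : V} (hu : u ∈ S) (hv : v ∈ S)
    (hx : ∀ w : G.Walk u v, x ∈ w.support) : x ∈ S := by
  obtain ⟨w, hw⟩ := (hconn u v).exists_walk_length_eq_dist
  exact hS u hu v hv w hw x (hx w)

theorem light {V : Type*} [Fintype V] [DecidableEq V]
    (G : SimpleGraph V) (hconn : G.Connected)
    (k : ℕ) (hk : 1 ≤ k) (U : Finset V) (hU : U.card = 4 * k - 2) (x : V)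
    (hx : ∀ u, ∀ T : Finset V, T ⊆ U → (∀ v ∈ T, (avoid G x).Reachable u v) → T.card < 2 * k) :
    ∃ A : Fin k → Finset V,
      (∀ i j, i ≠ j → Disjoint (A i) (A j)) ∧
      (Finset.univ.biUnion A = U) ∧
      (⋂ i, geodesicConvexHull G (A i : Set V)).Nonempty := by
  classical
  have : Nonempty V := ⟨x⟩
  obtain ⟨g, hg⟩ := exists_injective_nat (avoid G x).ConnectedComponent
  obtain ⟨p, hp, hinj, hmono, hle, hge⟩ :=
    sort_exists U (fun v => g ((avoid G x).connectedComponentMk v))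
  refine finish_pairs G k hk U _ p hp hinj 0 (2 * k - 1) (by omega) (by omega) x ?_
  intro i hi S hS h1 h2
  refine geo_mem G hconn hS h1 h2 ?_
  intro w
  by_contra hxw
  have hr := avoid_reach G x w hxw
  have := hx (p (0 + i)) (U.filter (fun v => (avoid G x).Reachable (p (0 + i)) v))
    (Finset.filter_subset _ _) (by simp)
  have h3 := hge (fun v => (avoid G x).Reachable (p (0 + i)) v) (Finset.Icc i (2 * k - 1 + i)) (by
    intro j hj
    rw [Finset.mem_Icc] at hj
    refine ⟨by omega, ?_⟩
    have e1 := hmono (0 + i) j (by omega) (by omega)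
    have e2 := hmono j (2 * k - 1 + i) (by omega) (by omega)
    have e3 : (avoid G x).connectedComponentMk (p (0 + i)) =
      (avoid G x).connectedComponentMk (p (2 * k - 1 + i)) := SimpleGraph.ConnectedComponent.sound hr
    simp only [← e3] at e2
    exact SimpleGraph.ConnectedComponent.exact (hg (le_antisymm e1 e2)))
  rw [Nat.card_Icc] at h3
  omega

section circle
variable {V : Type*} {G : SimpleGraph V} {m : ℕ} {z : ZMod m → V} {π : V → ZMod m}

theorem pass_start (hπ : ∀ u v, G.Adj u v → π u ≠ π v → u = z (π u) ∧ v = z (π v) ∧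
      (π v = π u + 1 ∨ π u = π v + 1)) {u v : V} (w : G.Walk u v) (h : π u ≠ π v) :
    z (π u) ∈ w.support := by
  induction w with
  | nil => exact absurd rfl h
  | @cons a b c hadj w ih =>
    by_cases hab : π a = π b
    · have := ih (hab ▸ h)
      rw [hab]
      exact List.mem_cons_of_mem _ this
    · rw [← (hπ a b hadj hab).1]
      exact SimpleGraph.Walk.start_mem_support _

theorem walk_shift (hπ : ∀ u v, G.Adj u v → π u ≠ π v → u = z (π u) ∧ v = z (π v) ∧
      (π v = π u + 1 ∨ π u = π v + 1)) {u v : V} (w : G.Walk u v) :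
    ∃ t : ℤ, |t| ≤ w.length ∧ π v = π u + (t : ZMod m) := by
  induction w with
  | nil => exact ⟨0, by simp, by simp⟩
  | @cons a b c hadj w ih =>
    obtain ⟨t, ht, e⟩ := ih
    rw [abs_le] at ht
    simp only [SimpleGraph.Walk.length_cons, Nat.cast_add, Nat.cast_one]
    by_cases hab : π a = π b
    · exact ⟨t, by rw [abs_le]; omega, by rw [hab, e]⟩
    · rcases (hπ a b hadj hab).2.2 with h | h
      · exact ⟨t + 1, by rw [abs_le]; omega, by rw [e, h]; push_cast; ring⟩
      · exact ⟨t - 1, by rw [abs_le]; omega, by rw [e, h]; push_cast; ring⟩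

theorem arc_walk (hz : ∀ i, G.Adj (z i) (z (i + 1))) (i : ZMod m) (d : ℕ) :
    ∃ w : G.Walk (z i) (z (i + d)), w.length = d ∧ ∀ e ≤ d, z (i + (e : ℕ)) ∈ w.support := by
  induction d with
  | zero =>
    refine ⟨SimpleGraph.Walk.nil.copy rfl (by simp), by simp, ?_⟩
    intro e he
    obtain rfl : e = 0 := by omega
    simp
  | succ d ih =>
    obtain ⟨w, hw, hs⟩ := ih
    have h : G.Adj (z (i + d)) (z (i + (d + 1 : ℕ))) := by
      have := hz (i + d)
      rwa [show i + (d : ZMod m) + 1 = i + ((d + 1 : ℕ) : ZMod m) by push_cast; ring] at this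
    refine ⟨w.concat h, by simp [hw], ?_⟩
    intro e he
    rw [SimpleGraph.Walk.support_concat]
    rcases Nat.lt_or_ge d e with h' | h'
    · obtain rfl : e = d + 1 := by omega
      simp
    · have := hs e h'
      simp [this]

theorem arc_mem (hconn : G.Connected) (hz : ∀ i, G.Adj (z i) (z (i + 1)))
    (hπz : ∀ i, π (z i) = i)
    (hπ : ∀ u v, G.Adj u v → π u ≠ π v → u = z (π u) ∧ v = z (π v) ∧
      (π v = π u + 1 ∨ π u = π v + 1)) {S : Set V} (hS : IsGeodesicallyConvex G S)
    (s : ZMod m) (a b c : ℕ) (hac : a ≤ c) (hcb : c ≤ b) (hm : 2 * (b - a) ≤ m)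
    (ha : z (s + a) ∈ S) (hb : z (s + b) ∈ S) : z (s + c) ∈ S := by
  obtain ⟨d, rfl⟩ := Nat.exists_eq_add_of_le (hac.trans hcb)
  obtain ⟨e, rfl⟩ := Nat.exists_eq_add_of_le hac
  obtain ⟨w, hw, hs⟩ := arc_walk hz (s + a) d
  have hb' : z (s + a + d) ∈ S := by
    rwa [show s + (a : ZMod m) + d = s + ((a + d : ℕ) : ZMod m) by push_cast; ring]
  have := hS _ ha _ hb' w ?_ _ (hs e (by omega))
  · rwa [show s + (a : ZMod m) + e = s + ((a + e : ℕ) : ZMod m) by push_cast; ring] at this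
  · refine le_antisymm ?_ (SimpleGraph.dist_le w)
    obtain ⟨w', hw'⟩ := (hconn (z (s + a)) (z (s + a + d))).exists_walk_length_eq_dist
    rw [← hw', hw]
    obtain ⟨t, ht, e⟩ := walk_shift hπ w'
    rw [hπz, hπz] at e
    have e2 : ((d - t : ℤ) : ZMod m) = 0 := by
      have := add_left_cancel e
      push_cast
      rw [this, sub_self]
    rw [ZMod.intCast_zmod_eq_zero_iff_dvd] at e2
    rw [abs_le] at ht
    by_contra hlt
    push Not at hlt
    have h1 : (0 : ℤ) < d - t := by omega
    have h2 := Int.le_of_dvd h1 e2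
    omega

theorem circle [Fintype V] [DecidableEq V] [NeZero m]
    (hconn : G.Connected) (hz : ∀ i, G.Adj (z i) (z (i + 1)))
    (hπz : ∀ i, π (z i) = i)
    (hπ : ∀ u v, G.Adj u v → π u ≠ π v → u = z (π u) ∧ v = z (π v) ∧
      (π v = π u + 1 ∨ π u = π v + 1))
    (k : ℕ) (hk : 1 ≤ k) (U : Finset V) (hU : U.card = 4 * k - 2)
    (hfib : ∀ i, (U.filter (fun u => π u = i)).card ≤ 2 * k - 2) :
    ∃ A : Fin k → Finset V,
      (∀ i j, i ≠ j → Disjoint (A i) (A j)) ∧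
      (Finset.univ.biUnion A = U) ∧
      (⋂ i, geodesicConvexHull G (A i : Set V)).Nonempty := by
  classical
  have hne : Nonempty V := ⟨z 0⟩
  have hm0 : 0 < m := Nat.pos_of_ne_zero (NeZero.ne m)
  obtain ⟨h, hh1, hh2⟩ : ∃ h, 2 * h ≤ m ∧ m ≤ 2 * h + 1 := ⟨m / 2, by omega, by omega⟩
  have hpos : ∀ (s : ZMod m) u, s + ((π u - s).val : ℕ) = π u := by
    intro s u
    rw [ZMod.natCast_zmod_val]
    ring
  have hlt : ∀ (s : ZMod m) u, (π u - s).val < m := fun s u => ZMod.val_lt _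
  have hproj : ∀ S : Set V, IsGeodesicallyConvex G S → ∀ u ∈ S, ∀ v ∈ S, π u ≠ π v →
      z (π u) ∈ S := fun S hS u hu v hv huv =>
    geo_mem G hconn hS hu hv (fun w => pass_start hπ w huv)
  by_cases hB : ∃ s : ZMod m, (U.filter (fun u => (π u - s).val < h)).card < k
  · obtain ⟨s, hs⟩ := hB
    obtain ⟨p, hp, hinj, hmono, hle, hge⟩ := sort_exists U (fun u => (π u - s).val)
    set D := (U.filter (fun u => (π u - s).val < h)).card with hD
    have hDpos : ∀ i, D ≤ i → i < U.card → h ≤ (π (p i) - s).val := by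
      intro i hi hiN
      by_contra hc
      have := hge (fun u => (π u - s).val < h) (Finset.range (i + 1)) (by
        intro j hj
        rw [Finset.mem_range] at hj
        have := hmono j i (by omega) hiN
        exact ⟨by omega, by omega⟩)
      rw [Finset.card_range] at this
      omega
    refine finish_pairs G k hk U _ p hp hinj D (D + (2 * k - 1)) (by omega) (by omega)
      (z (π (p (D + k - 1)))) ?_
    intro i hi S hS h1 h2
    have hne : π (p (D + i)) ≠ π (p (D + (2 * k - 1) + i)) := by
      intro heq
      have h3 := hfib (π (p (D + i)))
      have h4 := hge (fun u => π u = π (p (D + i))) (Finset.Icc (D + i) (D + (2 * k - 1) + i)) (by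
        intro j hj
        rw [Finset.mem_Icc] at hj
        refine ⟨by omega, ?_⟩
        have e1 := hmono (D + i) j (by omega) (by omega)
        have e2 := hmono j (D + (2 * k - 1) + i) (by omega) (by omega)
        simp only [← heq] at e1 e2
        have e3 := le_antisymm e2 e1
        have e4 := ZMod.val_injective m e3
        exact sub_left_injective e4)
      rw [Nat.card_Icc] at h4
      omega
    have z1 := hproj S hS _ h1 _ h2 hne
    have z2 := hproj S hS _ h2 _ h1 hne.symm
    rw [← hpos s] at z1 z2 ⊢
    have q1 := hDpos (D + i) (by omega) (by omega)
    have q2 := hlt s (p (D + (2 * k - 1) + i))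
    exact arc_mem hconn hz hπz hπ hS s _ _ _ (hmono (D + i) (D + k - 1) (by omega) (by omega))
      (hmono (D + k - 1) (D + (2 * k - 1) + i) (by omega) (by omega)) (by omega) z1 z2
  · push Not at hB
    obtain ⟨p, hp, hinj, hmono, hle, hge⟩ := sort_exists U (fun u => (π u - 0).val)
    simp only [sub_zero] at hmono
    refine finish_pairs G k hk U _ p hp hinj 0 (U.card - k) (by omega) (by omega) (z 0) ?_
    intro i hi S hS h1 h2
    set b := (π (p (U.card - k + i))).val with hb
    set a := (π (p (0 + i))).val with ha
    have hbm : b < m := ZMod.val_lt _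
    have ham : a < m := ZMod.val_lt _
    have key : a + m ≤ b + h := by
      by_contra hc
      push Not at hc
      have h3 := hB ((b + 1 : ℕ) : ZMod m)
      have h4 := hle (fun u => (π u - ((b + 1 : ℕ) : ZMod m)).val < h)
        (Finset.range i ∪ Finset.Ico (U.card - k + i + 1) U.card) (by
        intro j hj hlt'
        rw [Finset.mem_union, Finset.mem_range, Finset.mem_Ico]
        have e0 : π (p j) = ((b + 1 + (π (p j) - ((b + 1 : ℕ) : ZMod m)).val : ℕ) : ZMod m) := by
          rw [Nat.cast_add, ZMod.natCast_zmod_val]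
          ring
        generalize (π (p j) - ((b + 1 : ℕ) : ZMod m)).val = e at hlt' e0
        have e1 : (π (p j)).val = (b + 1 + e) % m := by rw [e0, ZMod.val_natCast]
        by_contra hcon
        push Not at hcon
        have m1 := hmono (0 + i) j (by omega) (by omega)
        have m2 := hmono j (U.card - k + i) (by omega) (by omega)
        rw [e1] at m1 m2
        rcases Nat.lt_or_ge (b + 1 + e) m with hl | hl
        · rw [Nat.mod_eq_of_lt hl] at m1 m2
          omega
        · rw [Nat.mod_eq_sub_mod hl, Nat.mod_eq_of_lt (by omega)] at m1 m2
          omega)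
      have h5 := Finset.card_union_le (Finset.range i) (Finset.Ico (U.card - k + i + 1) U.card)
      rw [Finset.card_range, Nat.card_Ico] at h5
      omega
    have hne : π (p (0 + i)) ≠ π (p (U.card - k + i)) := by
      intro heq
      have : a = b := by rw [ha, hb, heq]
      omega
    have z1 := hproj S hS _ h1 _ h2 hne
    have z2 := hproj S hS _ h2 _ h1 hne.symm
    have := arc_mem hconn hz hπz hπ hS 0 b (a + m) m (by omega) (by omega) (by omega)
      (by rw [hb, ZMod.natCast_zmod_val, zero_add]; exact z2)
      (by rw [Nat.cast_add, ha, ZMod.natCast_zmod_val, zero_add, ZMod.natCast_self, add_zero]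
          exact z1)
    simpa using this

end circle

theorem no_ear {V : Type*} [DecidableEq V] (G : SimpleGraph V)
    (hcactus : ¬ ∃ (u v : V) (_ : u ≠ v) (p q r : G.Walk u v),
      p.IsPath ∧ q.IsPath ∧ r.IsPath ∧
      List.Disjoint p.edges q.edges ∧ List.Disjoint q.edges r.edges ∧
      List.Disjoint p.edges r.edges)
    {x : V} (p : G.Walk x x) (hp : p.IsCycle) {u v : V} (hu : u ∈ p.support) (hv : v ∈ p.support)
    (hr : (G.deleteEdges {e | e ∈ p.edges}).Reachable u v) : u = v := by
  by_contra huv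
  apply hcactus
  obtain ⟨r⟩ := hr
  have hle : G.deleteEdges {e | e ∈ p.edges} ≤ G := SimpleGraph.deleteEdges_le _
  have hredge : ∀ e ∈ (r.mapLe hle).edges, e ∉ p.edges := by
    intro e he
    rw [SimpleGraph.Walk.edges_mapLe_eq_edges] at he
    have := r.edges_subset_edgeSet he
    rw [SimpleGraph.edgeSet_deleteEdges] at this
    exact this.2
  let c := p.rotate u hu
  have hc : c.IsCycle := hp.rotate hu
  have hce : ∀ e, e ∈ c.edges ↔ e ∈ p.edges := fun e => (p.rotate_edges u hu).mem_iff
  have hvc : v ∈ c.support := by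
    rw [SimpleGraph.Walk.mem_support_rotate_iff]
    exact hv
  let a := c.takeUntil v hvc
  let b := (c.dropUntil v hvc).reverse
  have hspec : c.edges = a.edges ++ (c.dropUntil v hvc).edges := by
    rw [← SimpleGraph.Walk.edges_append, SimpleGraph.Walk.take_spec]
  have hnd : c.edges.Nodup := hc.isTrail.edges_nodup
  rw [hspec, List.nodup_append'] at hnd
  have hbe : ∀ e, e ∈ b.edges ↔ e ∈ (c.dropUntil v hvc).edges := by
    intro e
    simp [b]
  have hap : ∀ e ∈ a.edges, e ∈ p.edges := by
    intro e he
    rw [← hce, hspec]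
    simp [he]
  have hbp : ∀ e ∈ b.edges, e ∈ p.edges := by
    intro e he
    rw [← hce, hspec]
    rw [hbe] at he
    simp [he]
  refine ⟨u, v, huv, a.bypass, b.bypass, (r.mapLe hle).bypass, a.bypass_isPath, b.bypass_isPath,
    SimpleGraph.Walk.bypass_isPath _, ?_, ?_, ?_⟩
  · intro e he he'
    have h1 := a.edges_bypass_subset_edges he
    have h2 := b.edges_bypass_subset_edges he'
    rw [hbe] at h2
    exact hnd.2.2 h1 h2
  · intro e he he'
    have h1 := b.edges_bypass_subset_edges he
    have h2 := SimpleGraph.Walk.edges_bypass_subset_edges _ he'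
    exact hredge e h2 (hbp e h1)
  · intro e he he'
    have h1 := a.edges_bypass_subset_edges he
    have h2 := SimpleGraph.Walk.edges_bypass_subset_edges _ he'
    exact hredge e h2 (hap e h1)

theorem cycle_data {V : Type*} [DecidableEq V] (G : SimpleGraph V) (hconn : G.Connected)
    (hcactus : ¬ ∃ (u v : V) (_ : u ≠ v) (p q r : G.Walk u v),
      p.IsPath ∧ q.IsPath ∧ r.IsPath ∧
      List.Disjoint p.edges q.edges ∧ List.Disjoint q.edges r.edges ∧
      List.Disjoint p.edges r.edges)
    {x : V} (p : G.Walk x x) (hp : p.IsCycle) :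
    ∃ (m : ℕ) (_ : NeZero m) (z : ZMod m → V) (π : V → ZMod m),
      (∀ i, G.Adj (z i) (z (i + 1))) ∧ (∀ i, π (z i) = i) ∧
      (∀ u v, G.Adj u v → π u ≠ π v → u = z (π u) ∧ v = z (π v) ∧
        (π v = π u + 1 ∨ π u = π v + 1)) ∧
      (∀ i, z i ∈ p.support) ∧ (∀ v ∈ p.support, ∃ i, z i = v) := by
  classical
  have h3 := hp.three_le_length
  have hm : NeZero p.length := ⟨by omega⟩
  let z : ZMod p.length → V := fun i => p.getVert i.val
  have hzn : ∀ n ≤ p.length, z (n : ZMod p.length) = p.getVert n := by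
    intro n hn
    rcases hn.lt_or_eq with h | h
    · simp only [z]
      rw [ZMod.val_natCast, Nat.mod_eq_of_lt h]
    · rw [h]
      simp [z]
  have hzs : ∀ i, z (i + 1) = p.getVert (i.val + 1) := by
    intro i
    rw [← hzn _ (ZMod.val_lt i)]
    simp
  have hadj : ∀ i, G.Adj (z i) (z (i + 1)) := by
    intro i
    rw [hzs]
    exact p.adj_getVert_succ (ZMod.val_lt i)
  have hinj : Function.Injective z := by
    intro i j hij
    apply ZMod.val_injective
    have := ZMod.val_lt i
    have := ZMod.val_lt j
    exact hp.getVert_injOn' (by simp; omega) (by simp; omega) hij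
  have hzsup : ∀ i, z i ∈ p.support := fun i => p.getVert_mem_support _
  have hsurj : ∀ v ∈ p.support, ∃ i, z i = v := by
    intro v hv
    obtain ⟨n, hn, hl⟩ := SimpleGraph.Walk.mem_support_iff_exists_getVert.1 hv
    exact ⟨n, (hzn n hl).trans hn⟩
  have hedge : ∀ u v, s(u, v) ∈ p.edges → ∃ i, s(z i, z (i + 1)) = s(u, v) := by
    intro u v h
    obtain ⟨n, hn, he⟩ := p.mk_mem_edges_iff_exists.1 h
    refine ⟨(n : ZMod p.length), ?_⟩
    rw [hzn n hn.le, ← he]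
    have := hzn (n + 1) hn
    push_cast at this
    rw [this]
  let G' := G.deleteEdges {e | e ∈ p.edges}
  have hex : ∀ u, ∃ i, G'.Reachable u (z i) := by
    intro u
    obtain ⟨w⟩ := hconn u x
    induction w with
    | nil =>
      obtain ⟨i, hi⟩ := hsurj _ p.start_mem_support
      exact ⟨i, hi ▸ SimpleGraph.Reachable.refl _⟩
    | @cons a b c hab w ih =>
      by_cases he : s(a, b) ∈ p.edges
      · obtain ⟨i, hi⟩ := hsurj a (p.fst_mem_support_of_mem_edges he)
        exact ⟨i, hi ▸ SimpleGraph.Reachable.refl _⟩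
      · obtain ⟨i, hi⟩ := ih p hp h3 hm hzn hzs hadj hinj hzsup hsurj hedge
        refine ⟨i, SimpleGraph.Reachable.trans (SimpleGraph.Adj.reachable ?_) hi⟩
        exact SimpleGraph.deleteEdges_adj.2 ⟨hab, he⟩
  choose π hπ using hex
  have huniq : ∀ u i, G'.Reachable u (z i) → π u = i := by
    intro u i h
    exact hinj (no_ear G hcactus p hp (hzsup _) (hzsup _) ((hπ u).symm.trans h))
  have hπz : ∀ i, π (z i) = i := fun i => huniq _ _ (SimpleGraph.Reachable.refl _)
  refine ⟨p.length, hm, z, π, hadj, hπz, ?_, hzsup, hsurj⟩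
  intro u v huv hne
  by_cases he : s(u, v) ∈ p.edges
  · obtain ⟨i, hi⟩ := hedge u v he
    rw [Sym2.eq_iff] at hi
    rcases hi with ⟨rfl, rfl⟩ | ⟨rfl, rfl⟩
    · simp [hπz]
    · simp [hπz]
  · exfalso
    apply hne
    apply huniq
    exact (SimpleGraph.Adj.reachable (SimpleGraph.deleteEdges_adj.2 ⟨huv, he⟩)).trans (hπ v)

theorem heavy {V : Type*} [Fintype V] [DecidableEq V]
    (G : SimpleGraph V) (hconn : G.Connected)
    (hcactus : ¬ ∃ (u v : V) (_ : u ≠ v) (p q r : G.Walk u v),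
      p.IsPath ∧ q.IsPath ∧ r.IsPath ∧
      List.Disjoint p.edges q.edges ∧ List.Disjoint q.edges r.edges ∧
      List.Disjoint p.edges r.edges)
    (k : ℕ) (hk : 1 ≤ k) (U : Finset V) (hU : U.card = 4 * k - 2)
    (hx : ∀ x, ∃ u, ∃ T : Finset V, T ⊆ U ∧ (∀ v ∈ T, (avoid G x).Reachable u v) ∧
      2 * k ≤ T.card) :
    ∃ A : Fin k → Finset V,
      (∀ i j, i ≠ j → Disjoint (A i) (A j)) ∧
      (Finset.univ.biUnion A = U) ∧
      (⋂ i, geodesicConvexHull G (A i : Set V)).Nonempty := by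
  classical
  have hne : Nonempty V := hconn.nonempty
  choose c T hTU hT hTc using hx
  let C : V → Finset V := fun x => Finset.univ.filter (fun v => (avoid G x).Reachable (c x) v)
  have hmem : ∀ x v, v ∈ C x ↔ (avoid G x).Reachable (c x) v := by simp [C]
  have hTC : ∀ x, T x ⊆ C x := fun x v hv => (hmem x v).2 (hT x v hv)
  have hiso : ∀ x v, (avoid G x).Reachable x v → v = x := by
    rintro x v ⟨w⟩
    cases w with
    | nil => rfl
    | cons h _ => exact absurd rfl h.2.1
  have hself : ∀ x, x ∉ C x := by
    intro x hxC
    have hr := (hmem x x).1 hxC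
    have hsub : T x ⊆ {x} := by
      intro v hv
      exact Finset.mem_singleton.2 (hiso x v (hr.symm.trans (hT x v hv)))
    have := Finset.card_le_card hsub
    have := hTc x
    rw [Finset.card_singleton] at *
    omega
  have hint : ∀ x y, ∃ w, w ∈ C x ∧ w ∈ C y := by
    intro x y
    by_contra hcon
    push Not at hcon
    have hd : Disjoint (T x) (T y) := by
      rw [Finset.disjoint_left]
      intro v h1 h2
      exact hcon v (hTC x h1) (hTC y h2)
    have h1 := Finset.card_le_card (Finset.union_subset (hTU x) (hTU y))
    rw [Finset.card_union_of_disjoint hd] at h1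
    have := hTc x
    have := hTc y
    omega
  have hclosed : ∀ x a b, a ∈ C x → (avoid G x).Reachable a b → b ∈ C x := by
    intro x a b ha hab
    exact (hmem x b).2 (((hmem x a).1 ha).trans hab)
  have hreach : ∀ x a b, a ∈ C x → b ∈ C x → (avoid G x).Reachable a b := by
    intro x a b ha hb
    exact ((hmem x a).1 ha).symm.trans ((hmem x b).1 hb)
  have hstep : ∀ x a b, a ∈ C x → b ∉ C x → G.Adj a b → b = x := by
    intro x a b ha hb hab
    by_contra hbx
    refine hb (hclosed x a b ha (SimpleGraph.Adj.reachable ⟨hab, ?_, hbx⟩))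
    rintro rfl
    exact hself _ ha
  obtain ⟨x, -, hmin⟩ := Finset.exists_min_image Finset.univ (fun x => (C x).card)
    Finset.univ_nonempty
  have hback : ∀ y ∈ C x, x ∈ C y := by
    intro y hy
    by_contra hxy
    have hsub : C y ⊆ C x := by
      intro v hv
      obtain ⟨w, hwx, hwy⟩ := hint x y
      obtain ⟨q⟩ := hreach y w v hwy hv
      refine hclosed x w v hwx (avoid_reach G x (q.mapLe (avoid_le G y)) ?_)
      rw [SimpleGraph.Walk.support_mapLe_eq_support]
      intro hxq
      exact hxy (hclosed y w x hwy (q.takeUntil x hxq).reachable)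
    have hss : C y ⊂ C x := by
      refine Finset.ssubset_iff_subset_ne.2 ⟨hsub, fun h => hself y ?_⟩
      rw [h]
      exact hy
    have := Finset.card_lt_card hss
    have := hmin y (Finset.mem_univ _)
    omega
  obtain ⟨y, hyC, hyx⟩ : ∃ y ∈ C x, G.Adj y x := by
    obtain ⟨w⟩ := hconn (c x) x
    obtain ⟨d, -, h1, h2⟩ := w.exists_boundary_dart (C x : Set V)
      ((hmem x _).2 (SimpleGraph.Reachable.refl _)) (hself x)
    have := hstep x _ _ h1 h2 d.adj
    exact ⟨d.fst, h1, this ▸ d.adj⟩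
  obtain ⟨y', hyC', hyx', hyy⟩ : ∃ y' ∈ C x, G.Adj y' x ∧ y' ≠ y := by
    obtain ⟨w, hwx, hwy⟩ := hint x y
    obtain ⟨q⟩ := hreach y w x hwy (hback y hyC)
    obtain ⟨d, -, h1, h2⟩ := q.exists_boundary_dart (C x : Set V) hwx (hself x)
    have hd := d.adj
    have := hstep x _ _ h1 h2 hd.1
    exact ⟨d.fst, h1, this ▸ hd.1, hd.2.1⟩
  have hyne : y ≠ x := hyx.ne
  obtain ⟨q, hq⟩ := (hreach x y y' hyC hyC').exists_isPath
  have hxq : x ∉ q.support := avoid_support G x q hyne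
  let q' := q.mapLe (avoid_le G x)
  have hq' : q'.IsPath := (SimpleGraph.Walk.isPath_mapLe _).2 hq
  have hsup : q'.support = q.support := SimpleGraph.Walk.support_mapLe_eq_support _ _
  let p : G.Walk x x := SimpleGraph.Walk.cons hyx.symm (q'.concat hyx')
  have hp : p.IsCycle := by
    rw [SimpleGraph.Walk.cons_isCycle_iff, SimpleGraph.Walk.concat_isPath_iff]
    refine ⟨⟨hq', by rwa [hsup]⟩, ?_⟩
    rw [SimpleGraph.Walk.edges_concat, List.concat_eq_append, List.mem_append, not_or]
    constructor
    · intro h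
      have := q'.fst_mem_support_of_mem_edges h
      rw [hsup] at this
      exact hxq this
    · rw [List.mem_singleton, Sym2.eq_iff]
      rintro (⟨h, -⟩ | ⟨-, h⟩)
      · exact hyx'.ne h.symm
      · exact hyy h.symm
  have hpsup : ∀ v ∈ p.support, v ≠ x → v ∈ C x := by
    intro v hv hvx
    have : v ∈ q.support := by
      simp only [p, SimpleGraph.Walk.support_cons, SimpleGraph.Walk.support_concat, List.mem_cons,
        List.concat_eq_append, List.mem_append, hsup] at hv
      simpa [hvx] using hv
    exact hclosed x y v hyC (q.takeUntil v this).reachable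
  have hxp : x ∈ p.support := p.start_mem_support
  have hyp : y ∈ p.support := by
    simp [p, SimpleGraph.Walk.support_concat, hsup]
  obtain ⟨m, hm, z, π, hz, hπz, hπ, hzsup, hsurj⟩ := cycle_data G hconn hcactus p hp
  refine circle hconn hz hπz hπ k hk U hU ?_
  intro i
  have hother : ∃ j, j ≠ i ∧ z j ∈ C (z i) := by
    by_cases hi : z i = x
    · obtain ⟨j, hj⟩ := hsurj y hyp
      refine ⟨j, ?_, ?_⟩
      · rintro rfl
        exact hyne (hj.symm.trans hi)
      · rw [hi, hj]
        exact hyC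
    · obtain ⟨j, hj⟩ := hsurj x hxp
      refine ⟨j, ?_, ?_⟩
      · rintro rfl
        exact hi hj
      · rw [hj]
        exact hback _ (hpsup _ (hzsup i) hi)
  obtain ⟨j, hji, hj⟩ := hother
  have hd : Disjoint (U.filter (fun u => π u = i)) (T (z i)) := by
    rw [Finset.disjoint_left]
    intro u hu huT
    have hui := (Finset.mem_filter.1 hu).2
    have huC := hTC _ huT
    obtain ⟨w⟩ := hreach (z i) u (z j) huC hj
    have hne : π u ≠ π (z j) := by
      rw [hui, hπz]
      exact hji.symm
    have h1 := pass_start hπ (w.mapLe (avoid_le G (z i))) hne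
    rw [hui, SimpleGraph.Walk.support_mapLe_eq_support] at h1
    refine avoid_support G (z i) w ?_ h1
    intro h
    rw [h] at huC
    exact hself _ huC
  have h1 := Finset.card_le_card (Finset.union_subset (Finset.filter_subset (fun u => π u = i) U)
    (hTU (z i)))
  rw [Finset.card_union_of_disjoint hd] at h1
  have := hTc (z i)
  omega

end CactusTv

/-- Tverberg for cactus graphs: any set of `4k-2` vertices of a cactus graph
(a connected graph with no three pairwise edge-disjoint paths between two
distinct vertices) has a partition into `k` parts whose geodesic convex hulls
have a common vertex. -/
theorem cactus_tverberg {V : Type*} [Fintype V] [DecidableEq V]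
    (G : SimpleGraph V) (hconn : G.Connected)
    (hcactus : ¬ ∃ (u v : V) (_ : u ≠ v) (p q r : G.Walk u v),
      p.IsPath ∧ q.IsPath ∧ r.IsPath ∧
      List.Disjoint p.edges q.edges ∧ List.Disjoint q.edges r.edges ∧
      List.Disjoint p.edges r.edges)
    (k : ℕ) (hk : 1 ≤ k) (U : Finset V) (hU : U.card = 4 * k - 2) :
    ∃ A : Fin k → Finset V,
      (∀ i j, i ≠ j → Disjoint (A i) (A j)) ∧
      (Finset.univ.biUnion A = U) ∧
      (⋂ i, geodesicConvexHull G (A i : Set V)).Nonempty := by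
  by_cases h : ∃ x, ∀ u, ∀ T : Finset V, T ⊆ U →
      (∀ v ∈ T, (CactusTv.avoid G x).Reachable u v) → T.card < 2 * k
  · obtain ⟨x, hx⟩ := h
    exact CactusTv.light G hconn k hk U hU x hx
  · push Not at h
    exact CactusTv.heavy G hconn hcactus k hk U hU h
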